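/- For all γ₁, γ₂, γ₃ ∈ ℂ, the operators K := (1/2)K₁, K₊ := K₂ + (1/2)K₃ − (γ₂/2)K₁², K₋ := K₂ − (1/2)K₃ − (γ₂/2)K₁² satisfy ⁅K, K₊⁆ = K₊, ⁅K, K₋⁆ = −K₋, ⁅K₋, K₊⁆ = 2(γ₁² + 2iγ₁γ₂ − 4γ₁γ₃ + 2(γ₂ + 3iγ₃)Ĥ₃)K + 16(γ₂² + 2γ₃² − 2γ₁γ₃ + 2iγ₂γ₃)K³ + 96γ₃²K⁵ (a fifth-order polynomial Higgs algebra), and the structure-function factorization K₊K₋ = Φ₁(Ĥ₃,K)·Φ₂(Ĥ₃,K) with ⁅Φ₁(Ĥ₃,K), Φ₂(Ĥ₃,K)⁆ = 0, where Φ₁(Ĥ₃,K) := (1/4)(Ĥ₃ − 2iγ₁K + 4γ₂K² + 8iγ₃K³) and Φ₂(Ĥ₃,K) := Ĥ₃ + 2iγ₁(K − Id) + 4γ₂(K − Id)² − 8iγ₃(K − Id)³. -/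

import Mathlib

noncomputable section

/-- `V = ℂ[q₁,q₂]`, the polynomial ring in two variables over `ℂ`. -/
abbrev V : Type := MvPolynomial (Fin 2) ℂ

/-- `q̂₁`: multiplication by `q₁`. -/
noncomputable def q1 : Module.End ℂ V := LinearMap.mulLeft ℂ (MvPolynomial.X 0)

/-- `q̂₂`: multiplication by `q₂`. -/
noncomputable def q2 : Module.End ℂ V := LinearMap.mulLeft ℂ (MvPolynomial.X 1)

/-- `p̂₁ = −i ∂/∂q₁`. -/
noncomputable def p1 : Module.End ℂ V :=
  (-Complex.I) • (MvPolynomial.pderiv (0 : Fin 2)).toLinearMap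

/-- `p̂₂ = −i ∂/∂q₂`. -/
noncomputable def p2 : Module.End ℂ V :=
  (-Complex.I) • (MvPolynomial.pderiv (1 : Fin 2)).toLinearMap

/-- `D = q̂₁p̂₁ + q̂₂p̂₂`. -/
noncomputable def Dop : Module.End ℂ V := q1 * p1 + q2 * p2

/-- `Ĉ = q̂₁p̂₂ − q̂₂p̂₁`, the quantum angular momentum. -/
noncomputable def Cop : Module.End ℂ V := q1 * p2 - q2 * p1

/-- `Ĥ₃ = p̂₁² + p̂₂² + γ₁D + γ₂D² + γ₃D³`. -/
noncomputable def H3 (γ₁ γ₂ γ₃ : ℂ) : Module.End ℂ V :=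
  p1 ^ 2 + p2 ^ 2 + γ₁ • Dop + γ₂ • Dop ^ 2 + γ₃ • Dop ^ 3

/-- `Î₃`, the third-order quantum symmetry of `Ĥ₃`. -/
noncomputable def I3 (γ₁ γ₂ γ₃ : ℂ) : Module.End ℂ V :=
  p2 ^ 2 + γ₁ • (q2 * p2) + γ₂ • ((q1 ^ 2 + q2 ^ 2) * p2 ^ 2 - Cop ^ 2)
    + γ₃ • (q2 ^ 3 * (p2 ^ 3 - p1 ^ 2 * p2) + (q1 ^ 3 + 3 * (q1 * q2 ^ 2)) * (p1 * p2 ^ 2)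
        - (3 * Complex.I) • (q2 ^ 2 * p2 ^ 2) - (3 * Complex.I) • (q1 * q2 * p1 * p2)
        - q2 * p2)

/-- `Î₃′`, the third-order quantum symmetry of `Ĥ₃`. -/
noncomputable def I3' (γ₁ γ₂ γ₃ : ℂ) : Module.End ℂ V :=
  p1 ^ 2 + γ₁ • (q1 * p1) + γ₂ • ((q1 ^ 2 + q2 ^ 2) * p1 ^ 2)
    + γ₃ • (q1 ^ 3 * (p1 ^ 3 - p1 * p2 ^ 2) + (q2 ^ 3 + 3 * (q1 ^ 2 * q2)) * (p1 ^ 2 * p2)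
        - (3 * Complex.I) • (q1 ^ 2 * p1 ^ 2) - (3 * Complex.I) • (q1 * q2 * p1 * p2)
        - q1 * p1)

/-- `K₁ = Ĉ`. -/
noncomputable def K1 : Module.End ℂ V := Cop

/-- `K₂ = (1/2)(Î₃′ − Î₃)`. -/
noncomputable def K2 (γ₁ γ₂ γ₃ : ℂ) : Module.End ℂ V :=
  ((1 : ℂ)/2) • (I3' γ₁ γ₂ γ₃ - I3 γ₁ γ₂ γ₃)

/-- `K₃ = ⁅K₁, K₂⁆`. -/
noncomputable def K3 (γ₁ γ₂ γ₃ : ℂ) : Module.End ℂ V :=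
  K1 * K2 γ₁ γ₂ γ₃ - K2 γ₁ γ₂ γ₃ * K1

/-- The number operator `K = (1/2)K₁`. -/
noncomputable def Kop : Module.End ℂ V := ((1 : ℂ)/2) • K1

/-- The raising operator `K₊ = K₂ + (1/2)K₃ − (γ₂/2)K₁²`. -/
noncomputable def Kplus (γ₁ γ₂ γ₃ : ℂ) : Module.End ℂ V :=
  K2 γ₁ γ₂ γ₃ + ((1 : ℂ)/2) • K3 γ₁ γ₂ γ₃ - (γ₂/2) • K1 ^ 2

/-- The lowering operator `K₋ = K₂ − (1/2)K₃ − (γ₂/2)K₁²`. -/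
noncomputable def Kminus (γ₁ γ₂ γ₃ : ℂ) : Module.End ℂ V :=
  K2 γ₁ γ₂ γ₃ - ((1 : ℂ)/2) • K3 γ₁ γ₂ γ₃ - (γ₂/2) • K1 ^ 2

/-- `Φ₁(Ĥ₃,K) = (1/4)(Ĥ₃ − 2iγ₁K + 4γ₂K² + 8iγ₃K³)`. -/
noncomputable def Phi1op (γ₁ γ₂ γ₃ : ℂ) : Module.End ℂ V :=
  ((1 : ℂ)/4) • (H3 γ₁ γ₂ γ₃ - (2 * Complex.I * γ₁) • Kop + (4 * γ₂) • Kop ^ 2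
    + (8 * Complex.I * γ₃) • Kop ^ 3)

/-- `Φ₂(Ĥ₃,K) = Ĥ₃ + 2iγ₁(K − Id) + 4γ₂(K − Id)² − 8iγ₃(K − Id)³`. -/
noncomputable def Phi2op (γ₁ γ₂ γ₃ : ℂ) : Module.End ℂ V :=
  H3 γ₁ γ₂ γ₃ + (2 * Complex.I * γ₁) • (Kop - 1) + (4 * γ₂) • (Kop - 1) ^ 2
    - (8 * Complex.I * γ₃) • (Kop - 1) ^ 3

/-!
In the coordinates `z = q₁ + i q₂` and `w = q₁ - i q₂` one has `Ĉ = z∂_z - w∂_w`,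
`i D = z∂_z + w∂_w` and `Ĥ = h(i D) - 4 ∂_z∂_w` for a polynomial `h`. Since `i D + Ĉ = 2 z∂_z`, the
divided difference `h[i D, -Ĉ]` yields an operator `F = h[i D, -Ĉ] z - 2 ∂_w` with
`2 F ∂_z = Ĥ - h(-Ĉ)`, and for the cubic `h` of the Zernike Hamiltonian `K₊ = F ∂_w`, while `K₋`
is its image under the exchange of `z` and `w`. Moving the derivations through
`4 K₊K₋ = (2 F) ∂_w (2 F') ∂_z`, where `F'` is the image of `F`, leaves
`(Ĥ - h(-Ĉ)) (Ĥ - h(Ĉ - 2))`. The exchange maps `Ĉ` to `-Ĉ`, so it also gives `4 K₋K₊`, and the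
commutator becomes a computation with commuting operators.
-/

open Polynomial hiding smul_pow

section DivDiff

variable {R A : Type*} [CommRing R] [Ring A] [Algebra R A]

/-- The divided difference `h[s, t] = (h(s) - h(t)) / (s - t)` of a polynomial `h`, linear in `h`
and spelled out as a sum of products so that it makes sense when `s - t` is not invertible. -/
def divDiff (s t : A) : R[X] →ₗ[R] A :=
  lsum fun n ↦ LinearMap.toSpanSingleton R A (∑ i ∈ Finset.range n, s ^ i * t ^ (n - 1 - i))

lemma divDiff_monomial (s t : A) (n : ℕ) (c : R) :
    divDiff s t (monomial n c) = c • ∑ i ∈ Finset.range n, s ^ i * t ^ (n - 1 - i) := by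
  simp [divDiff, lsum_apply, sum_monomial_index]

lemma divDiff_mul_sub {s t : A} (hst : Commute s t) (h : R[X]) :
    divDiff s t h * (s - t) = aeval s h - aeval t h := by
  induction h using Polynomial.induction_on' with
  | add f g hf hg => rw [map_add, add_mul, hf, hg, map_add, map_add]; abel
  | monomial n c =>
    rw [divDiff_monomial, smul_mul_assoc, hst.geom_sum₂_mul, aeval_monomial, aeval_monomial,
      smul_sub, Algebra.smul_def, Algebra.smul_def]

lemma semiconjBy_divDiff {x s s' t t' : A} (hs : SemiconjBy x s s') (ht : SemiconjBy x t t')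
    (h : R[X]) : SemiconjBy x (divDiff s t h) (divDiff s' t' h) := by
  induction h using Polynomial.induction_on' with
  | add f g hf hg => simpa only [map_add] using hf.add_right hg
  | monomial n c =>
    simp only [divDiff_monomial, SemiconjBy, mul_smul_comm, smul_mul_assoc, Finset.mul_sum,
      Finset.sum_mul]
    congr 1
    exact Finset.sum_congr rfl fun i _ ↦ (hs.pow_right i).mul_right (ht.pow_right _)

lemma semiconjBy_aeval {x s s' : A} (hs : SemiconjBy x s s') (h : R[X]) :
    SemiconjBy x (aeval s h) (aeval s' h) := by
  induction h using Polynomial.induction_on' with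
  | add f g hf hg => simpa only [map_add] using hf.add_right hg
  | monomial n c =>
    simp only [aeval_monomial]
    exact SemiconjBy.mul_right (Algebra.commute_algebraMap_right c x) (hs.pow_right n)

end DivDiff

section Cubic

variable {R A : Type*} [CommRing R] [Ring A] [Algebra R A]

/-- The polynomial `c₁ X + c₂ X² + c₃ X³`, parametrizing the cubic momentum-dependent potentials. -/
def cubic (c₁ c₂ c₃ : R) : R[X] := C c₁ * X + C c₂ * X ^ 2 + C c₃ * X ^ 3

lemma aeval_cubic (c₁ c₂ c₃ : R) (x : A) :
    aeval x (cubic c₁ c₂ c₃) = c₁ • x + c₂ • x ^ 2 + c₃ • x ^ 3 := by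
  simp [cubic, Algebra.smul_def]

lemma aeval_neg_cubic (c₁ c₂ c₃ : R) (x : A) :
    aeval (-x) (cubic c₁ c₂ c₃) = aeval x (cubic (-c₁) c₂ (-c₃)) := by
  simp [aeval_cubic, Odd.neg_pow (n := 3) (by decide)]

lemma divDiff_cubic (c₁ c₂ c₃ : R) (s t : A) :
    divDiff s t (cubic c₁ c₂ c₃) = c₁ • 1 + c₂ • (t + s) + c₃ • (t ^ 2 + s * t + s ^ 2) := by
  have hcubic : cubic c₁ c₂ c₃ = monomial 1 c₁ + monomial 2 c₂ + monomial 3 c₃ := by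
    simp only [cubic, ← C_mul_X_pow_eq_monomial, pow_one]
  simp [hcubic, divDiff_monomial, Finset.sum_range_succ]

end Cubic

/-- Two commuting Weyl pairs `(z, ∂_z)` and `(w, ∂_w)` in a ring, `dz` and `dw` standing for the
derivations `∂_z` and `∂_w`. -/
structure WeylPairs (A : Type*) [Ring A] where
  z : A
  dz : A
  w : A
  dw : A
  dz_mul_z : dz * z = z * dz + 1
  dw_mul_w : dw * w = w * dw + 1
  z_comm_w : Commute z w
  z_comm_dw : Commute z dw
  w_comm_dz : Commute w dz
  dz_comm_dw : Commute dz dw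

namespace WeylPairs

variable {R A : Type*} [CommRing R] [Ring A] [Algebra R A] (W : WeylPairs A)

/-- The symmetry exchanging the two Weyl pairs; it turns raising operators into lowering ones. -/
@[simps]
def swap : WeylPairs A where
  z := W.w
  dz := W.dw
  w := W.z
  dw := W.dz
  dz_mul_z := W.dw_mul_w
  dw_mul_w := W.dz_mul_z
  z_comm_w := W.z_comm_w.symm
  z_comm_dw := W.w_comm_dz
  w_comm_dz := W.z_comm_dw
  dz_comm_dw := W.dz_comm_dw.symm

/-- The Euler operator `z ∂_z + w ∂_w`. -/
def degree : A := W.z * W.dz + W.w * W.dw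

/-- The angular momentum `z ∂_z - w ∂_w`. -/
def angular : A := W.z * W.dz - W.w * W.dw

lemma swap_swap : W.swap.swap = W := rfl

lemma swap_degree : W.swap.degree = W.degree := add_comm _ _

lemma swap_angular : W.swap.angular = -W.angular := (neg_sub _ _).symm

lemma degree_sub_angular : W.degree - W.angular = 2 * (W.w * W.dw) := by
  rw [degree, angular]; noncomm_ring

lemma degree_add_angular : W.degree + W.angular = 2 * (W.z * W.dz) := by
  rw [degree, angular]; noncomm_ring

lemma commute_z_w_mul_dw : Commute W.z (W.w * W.dw) := W.z_comm_w.mul_right W.z_comm_dw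

lemma commute_dz_w_mul_dw : Commute W.dz (W.w * W.dw) :=
  W.w_comm_dz.symm.mul_right W.dz_comm_dw

lemma semiconjBy_z_z_mul_dz : SemiconjBy W.z (W.z * W.dz) (W.z * W.dz - 1) := by
  rw [SemiconjBy, sub_mul, mul_assoc W.z W.dz, W.dz_mul_z]
  noncomm_ring

lemma semiconjBy_dz_z_mul_dz : SemiconjBy W.dz (W.z * W.dz) (W.z * W.dz + 1) := by
  rw [SemiconjBy, ← mul_assoc, W.dz_mul_z]

lemma semiconjBy_z_angular : SemiconjBy W.z W.angular (W.angular - 1) := by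
  simpa only [angular, sub_right_comm] using
    W.semiconjBy_z_z_mul_dz.sub_right W.commute_z_w_mul_dw

lemma semiconjBy_dz_degree : SemiconjBy W.dz W.degree (W.degree + 1) := by
  simpa only [degree, add_right_comm] using
    W.semiconjBy_dz_z_mul_dz.add_right W.commute_dz_w_mul_dw

lemma semiconjBy_dz_angular : SemiconjBy W.dz W.angular (W.angular + 1) := by
  simpa only [angular, sub_add_eq_add_sub] using
    W.semiconjBy_dz_z_mul_dz.sub_right W.commute_dz_w_mul_dw

lemma semiconjBy_dw_degree : SemiconjBy W.dw W.degree (W.degree + 1) := by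
  simpa only [swap_dz, swap_degree] using W.swap.semiconjBy_dz_degree

lemma semiconjBy_dw_angular : SemiconjBy W.dw W.angular (W.angular - 1) := by
  simpa only [swap_dz, swap_angular, neg_neg, neg_add', sub_neg_eq_add, neg_add_eq_sub, neg_sub]
    using W.swap.semiconjBy_dz_angular.neg_right

lemma commute_degree_angular : Commute W.degree W.angular := by
  have hab : Commute (W.z * W.dz) (W.w * W.dw) :=
    W.commute_z_w_mul_dw.mul_left W.commute_dz_w_mul_dw
  exact ((Commute.refl _).sub_right hab).add_left (hab.symm.sub_right (Commute.refl _))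

/-- The Hamiltonian `-4 ∂_z ∂_w + h(z ∂_z + w ∂_w)`. -/
def hamiltonian (h : R[X]) : A := aeval W.degree h - 4 * (W.dz * W.dw)

lemma swap_hamiltonian (h : R[X]) : W.swap.hamiltonian h = W.hamiltonian h := by
  rw [hamiltonian, hamiltonian, swap_degree, swap_dz, swap_dw, W.dz_comm_dw.eq]

lemma commute_angular_hamiltonian (h : R[X]) : Commute W.angular (W.hamiltonian h) := by
  have hlaplacian : SemiconjBy (W.dz * W.dw) W.angular W.angular :=
    (by simpa using W.semiconjBy_dz_angular.sub_right (Commute.one_right W.dz) :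
      SemiconjBy W.dz (W.angular - 1) W.angular).mul_left W.semiconjBy_dw_angular
  exact (semiconjBy_aeval W.commute_degree_angular.symm h).sub_right
    ((Nat.cast_commute 4 W.angular).symm.mul_right hlaplacian.symm)

/-- The left factor `F` of the raising operator `F * ∂_w`, chosen so that `2 * F * ∂_z` is a
function of the Hamiltonian and the angular momentum. -/
def raisingFactor (h : R[X]) : A := divDiff W.degree (-W.angular) h * W.z - 2 * W.dw

/-- The operator raising the angular momentum by `2`. -/
def raising (h : R[X]) : A := W.raisingFactor h * W.dw

/-- The operator lowering the angular momentum by `2`. -/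
def lowering (h : R[X]) : A := W.swap.raising h

lemma semiconjBy_raising_angular (h : R[X]) :
    SemiconjBy (W.raising h) W.angular (W.angular - 2) := by
  have hdivDiff : Commute (divDiff W.degree (-W.angular) h) (W.angular - 1) :=
    (semiconjBy_divDiff (W.commute_degree_angular.symm.sub_left (Commute.one_left _))
      ((Commute.refl W.angular).sub_left (Commute.one_left _)).neg_right h).symm
  have hfactor : SemiconjBy (W.raisingFactor h) W.angular (W.angular - 1) :=
    (SemiconjBy.mul_left hdivDiff W.semiconjBy_z_angular).sub_left
      (SemiconjBy.mul_left (Nat.cast_commute 2 _) W.semiconjBy_dw_angular)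
  rw [← one_add_one_eq_two, ← sub_sub]
  exact (hfactor.sub_right (SemiconjBy.one_right _)).mul_left W.semiconjBy_dw_angular

lemma semiconjBy_lowering_angular (h : R[X]) :
    SemiconjBy (W.lowering h) W.angular (W.angular + 2) := by
  simpa [swap_angular, add_comm, lowering] using (W.swap.semiconjBy_raising_angular h).neg_right

lemma two_mul_raisingFactor_mul_dz (h : R[X]) :
    2 * W.raisingFactor h * W.dz = W.hamiltonian h - aeval (-W.angular) h := by
  have hdivDiff := divDiff_mul_sub W.commute_degree_angular.neg_right h
  rw [sub_neg_eq_add, degree_add_angular] at hdivDiff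
  calc
    _ = divDiff W.degree (-W.angular) h * (2 * (W.z * W.dz)) - 4 * (W.dw * W.dz) := by
      rw [raisingFactor]; noncomm_ring
    _ = _ := by
      rw [hdivDiff, hamiltonian, W.dz_comm_dw.eq]; abel

lemma two_mul_dw_mul_swap_raisingFactor (h : R[X]) :
    2 * W.dw * W.swap.raisingFactor h =
      aeval (W.degree + 1) h - aeval (W.angular - 1) h - 4 * (W.dz * W.dw) := by
  have hshift : W.dw * divDiff W.degree W.angular h =
      divDiff (W.degree + 1) (W.angular - 1) h * W.dw :=
    semiconjBy_divDiff W.semiconjBy_dw_degree W.semiconjBy_dw_angular h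
  have hdiff : W.degree + 1 - (W.angular - 1) = 2 * (W.dw * W.w) := by
    rw [W.dw_mul_w, mul_add, ← W.degree_sub_angular]; noncomm_ring
  have hcomm : Commute (W.degree + 1) (W.angular - 1) :=
    (W.commute_degree_angular.add_left (Commute.one_left _)).sub_right (Commute.one_right _)
  rw [← divDiff_mul_sub hcomm, hdiff]
  calc
    _ = 2 * (W.dw * divDiff W.degree W.angular h) * W.w - 4 * (W.dw * W.dz) := by
      simp only [raisingFactor, swap_degree, swap_angular, neg_neg, swap_z, swap_dw]
      noncomm_ring
    _ = _ := by
      rw [hshift, W.dz_comm_dw.eq]; noncomm_ring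

lemma two_mul_dw_mul_swap_raisingFactor_mul_dz (h : R[X]) :
    2 * W.dw * W.swap.raisingFactor h * W.dz =
      W.dz * (W.hamiltonian h - aeval (W.angular - 2) h) := by
  have hangular : SemiconjBy W.dz (W.angular - 2) (W.angular - 1) := by
    have hshift := W.semiconjBy_dz_angular.sub_right (Nat.cast_commute 2 W.dz).symm
    rwa [Nat.cast_ofNat, ← one_add_one_eq_two, add_sub_add_right_eq_sub, one_add_one_eq_two]
      at hshift
  have hlaplacian : Commute W.dz (4 * (W.dz * W.dw)) :=
    (Nat.cast_commute 4 W.dz).symm.mul_right ((Commute.refl _).mul_right W.dz_comm_dw)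
  rw [two_mul_dw_mul_swap_raisingFactor, hamiltonian, sub_right_comm]
  exact (((semiconjBy_aeval W.semiconjBy_dz_degree h).sub_right hlaplacian).sub_right
    (semiconjBy_aeval hangular h)).eq.symm

theorem four_nsmul_raising_mul_lowering (h : R[X]) :
    4 • (W.raising h * W.lowering h) =
      (W.hamiltonian h - aeval (-W.angular) h) * (W.hamiltonian h - aeval (W.angular - 2) h) :=
  calc
    _ = 2 * W.raisingFactor h * (2 * W.dw * W.swap.raisingFactor h * W.dz) := by
      rw [raising, lowering, raising, swap_dw]; noncomm_ring
    _ = 2 * W.raisingFactor h * W.dz * (W.hamiltonian h - aeval (W.angular - 2) h) := by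
      rw [two_mul_dw_mul_swap_raisingFactor_mul_dz]; noncomm_ring
    _ = _ := by
      rw [two_mul_raisingFactor_mul_dz]

theorem four_nsmul_lowering_mul_raising (h : R[X]) :
    4 • (W.lowering h * W.raising h) =
      (W.hamiltonian h - aeval W.angular h) * (W.hamiltonian h - aeval (-W.angular - 2) h) := by
  simpa only [lowering, swap_swap, swap_hamiltonian, swap_angular, neg_neg] using
    W.swap.four_nsmul_raising_mul_lowering h

lemma commute_hamiltonian_aeval_angular (h f : R[X]) :
    Commute (W.hamiltonian h) (aeval W.angular f) :=
  semiconjBy_aeval (W.commute_angular_hamiltonian h).symm f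

lemma commute_hamiltonian_sub_aeval (h : R[X]) :
    Commute (W.hamiltonian h - aeval (-W.angular) h)
      (W.hamiltonian h - aeval (W.angular - 2) h) := by
  have hneg := W.commute_hamiltonian_aeval_angular h (h.comp (-X))
  have hsub := W.commute_hamiltonian_aeval_angular h (h.comp (X - 2))
  have hangular : Commute (aeval W.angular (h.comp (-X))) (aeval W.angular (h.comp (X - 2))) :=
    (Commute.all _ _).map (aeval W.angular)
  simp only [aeval_comp, map_neg, map_sub, aeval_X, map_ofNat] at hneg hsub hangular
  exact ((Commute.refl _).sub_right hsub).sub_left (hneg.symm.sub_right hangular)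

theorem four_nsmul_lowering_raising_commutator (h : R[X]) :
    4 • (W.lowering h * W.raising h - W.raising h * W.lowering h) =
      W.hamiltonian h *
          aeval W.angular (h.comp (-X) + h.comp (X - 2) - h - h.comp (-X - 2)) +
        aeval W.angular (h * h.comp (-X - 2) - h.comp (-X) * h.comp (X - 2)) := by
  have hcomm := W.commute_hamiltonian_aeval_angular h
  rw [smul_sub, four_nsmul_lowering_mul_raising, four_nsmul_raising_mul_lowering]
  simp only [map_sub, map_add, map_mul, aeval_comp, map_neg, aeval_X, map_ofNat]
  have h₁ := hcomm h
  have h₂ := hcomm (h.comp (-X))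
  simp only [aeval_comp, map_neg, aeval_X] at h₂
  rw [sub_mul, sub_mul, mul_sub, mul_sub, mul_sub, mul_sub, ← h₁.eq, ← h₂.eq]
  noncomm_ring

theorem four_nsmul_lowering_raising_commutator_cubic (c₁ c₂ c₃ : R) :
    4 • (W.lowering (cubic c₁ c₂ c₃) * W.raising (cubic c₁ c₂ c₃) -
        W.raising (cubic c₁ c₂ c₃) * W.lowering (cubic c₁ c₂ c₃)) =
      (4 * (2 * c₁ * c₂ - c₁ ^ 2 - 4 * c₁ * c₃)) • W.angular +
        (8 * (3 * c₃ - c₂)) • (W.hamiltonian (cubic c₁ c₂ c₃) * W.angular) +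
        (8 * (c₂ ^ 2 - 2 * c₃ ^ 2 - 2 * c₁ * c₃ - 2 * c₂ * c₃)) • W.angular ^ 3 -
        (12 * c₃ ^ 2) • W.angular ^ 5 := by
  set h := cubic c₁ c₂ c₃ with h_def
  have hlin : h.comp (-X) + h.comp (X - 2) - h - h.comp (-X - 2) = C (8 * (3 * c₃ - c₂)) * X := by
    simp only [h_def, cubic, add_comp, mul_comp, pow_comp, C_comp, X_comp, map_mul, map_sub,
      map_ofNat C]
    ring
  have hquad : h * h.comp (-X - 2) - h.comp (-X) * h.comp (X - 2) =
      C (4 * (2 * c₁ * c₂ - c₁ ^ 2 - 4 * c₁ * c₃)) * X +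
        C (8 * (c₂ ^ 2 - 2 * c₃ ^ 2 - 2 * c₁ * c₃ - 2 * c₂ * c₃)) * X ^ 3 -
        C (12 * c₃ ^ 2) * X ^ 5 := by
    simp only [h_def, cubic, add_comp, mul_comp, pow_comp, C_comp, X_comp, map_mul, map_sub,
      map_pow, map_ofNat C]
    ring
  rw [four_nsmul_lowering_raising_commutator, hlin, hquad]
  simp only [map_add, map_sub, map_mul (aeval W.angular), map_pow (aeval W.angular),
    aeval_C, aeval_X, ← Algebra.smul_def, mul_smul_comm]
  abel

lemma dz_mul_z_mul (x : A) : W.dz * (W.z * x) = W.z * (W.dz * x) + x := by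
  rw [← mul_assoc, W.dz_mul_z, add_mul, one_mul, mul_assoc]

lemma dw_mul_w_mul (x : A) : W.dw * (W.w * x) = W.w * (W.dw * x) + x :=
  W.swap.dz_mul_z_mul x

lemma raising_cubic (c₁ c₂ c₃ : R) :
    W.raising (cubic c₁ c₂ c₃) = c₁ • (W.z * W.dw) + (2 * c₂) • (W.z * W.w * W.dw ^ 2) +
      c₃ • (W.z ^ 3 * W.dz ^ 2 * W.dw + 3 • (W.z * W.w ^ 2 * W.dw ^ 3) +
        3 • (W.z ^ 2 * W.dz * W.dw) + 3 • (W.z * W.w * W.dw ^ 2) + W.z * W.dw) -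
      2 • W.dw ^ 2 := by
  simp only [raising, raisingFactor, divDiff_cubic, degree, angular, pow_succ, pow_zero, one_mul,
    mul_add, add_mul, mul_sub, sub_mul, neg_sub, smul_mul_assoc, mul_assoc,
    W.dz_mul_z, W.dz_mul_z_mul, W.dw_mul_w_mul, W.z_comm_w.symm.left_comm, W.z_comm_dw.symm.eq,
    W.z_comm_dw.symm.left_comm, W.w_comm_dz.symm.left_comm, W.dz_comm_dw.symm.eq, two_mul]
  module

/-- The Weyl pairs of the complex coordinates `z = x + i y` and `w = x - i y`, where `W` consists
of the pairs `(x, ∂_x)` and `(y, ∂_y)`. -/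
def complexify [Algebra ℂ A] : WeylPairs A where
  z := W.z + Complex.I • W.w
  dz := (1 / 2 : ℂ) • (W.dz - Complex.I • W.dw)
  w := W.z - Complex.I • W.w
  dw := (1 / 2 : ℂ) • (W.dz + Complex.I • W.dw)
  dz_mul_z := by
    simp only [mul_add, mul_sub, add_mul, sub_mul, smul_mul_assoc, mul_smul_comm, W.dz_mul_z,
      W.dw_mul_w, W.w_comm_dz.symm.eq, W.z_comm_dw.symm.eq]
    match_scalars <;> grind [Complex.I_mul_I]
  dw_mul_w := by
    simp only [mul_add, mul_sub, add_mul, sub_mul, smul_mul_assoc, mul_smul_comm, W.dz_mul_z,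
      W.dw_mul_w, W.w_comm_dz.symm.eq, W.z_comm_dw.symm.eq]
    match_scalars <;> grind [Complex.I_mul_I]
  z_comm_w := by
    simp only [Commute, SemiconjBy, mul_add, mul_sub, add_mul, sub_mul, smul_mul_assoc,
      mul_smul_comm, W.z_comm_w.eq]
    module
  z_comm_dw := by
    simp only [Commute, SemiconjBy, mul_add, add_mul, smul_mul_assoc, mul_smul_comm, W.dz_mul_z,
      W.dw_mul_w, W.w_comm_dz.symm.eq, W.z_comm_dw.symm.eq]
    match_scalars <;> grind [Complex.I_mul_I]
  w_comm_dz := by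
    simp only [Commute, SemiconjBy, mul_sub, sub_mul, smul_mul_assoc, mul_smul_comm, W.dz_mul_z,
      W.dw_mul_w, W.w_comm_dz.symm.eq, W.z_comm_dw.symm.eq]
    match_scalars <;> grind [Complex.I_mul_I]
  dz_comm_dw := by
    simp only [Commute, SemiconjBy, mul_add, mul_sub, add_mul, sub_mul, smul_mul_assoc,
      mul_smul_comm, W.dz_comm_dw.eq]
    module

end WeylPairs

lemma pderiv_comm {σ R : Type*} [CommRing R] (i j : σ) (f : MvPolynomial σ R) :
    MvPolynomial.pderiv i (MvPolynomial.pderiv j f) =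
      MvPolynomial.pderiv j (MvPolynomial.pderiv i f) := by
  classical
  let D (k : σ) : Derivation R (MvPolynomial σ R) (MvPolynomial σ R) := MvPolynomial.pderiv k
  have hbracket : ⁅D i, D j⁆ = 0 := MvPolynomial.derivation_ext fun k ↦ by
    simp [D, Derivation.commutator_apply, MvPolynomial.pderiv_X, Pi.single_apply, apply_ite]
  simpa [D, Derivation.commutator_apply, sub_eq_zero] using DFunLike.congr_fun hbracket f

/-- Multiplication by the variables `X i` and `X j` together with the partial derivatives, as
operators on polynomials. -/
def polynomialPairs {σ R : Type*} [CommRing R] {i j : σ} (hij : i ≠ j) :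
    WeylPairs (Module.End R (MvPolynomial σ R)) where
  z := LinearMap.mulLeft R (MvPolynomial.X i)
  dz := (MvPolynomial.pderiv i).toLinearMap
  w := LinearMap.mulLeft R (MvPolynomial.X j)
  dw := (MvPolynomial.pderiv j).toLinearMap
  dz_mul_z := LinearMap.ext fun f ↦ by simp
  dw_mul_w := LinearMap.ext fun f ↦ by simp
  z_comm_w := LinearMap.ext fun f ↦ mul_left_comm _ _ _
  z_comm_dw := LinearMap.ext fun f ↦ by simp [MvPolynomial.pderiv_X_of_ne hij]
  w_comm_dz := LinearMap.ext fun f ↦ by simp [MvPolynomial.pderiv_X_of_ne hij.symm]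
  dz_comm_dw := LinearMap.ext fun f ↦ pderiv_comm _ _ _

/-- The Weyl pairs of the complex coordinates `q₁ ± i q₂` on `V`. -/
def complexPairs : WeylPairs (Module.End ℂ V) :=
  (polynomialPairs Fin.zero_ne_one).complexify

lemma q1_eq : q1 = (1 / 2 : ℂ) • (complexPairs.z + complexPairs.w) := by
  simp only [complexPairs, WeylPairs.complexify, polynomialPairs, q1]
  module

lemma q2_eq : q2 = (Complex.I / 2) • (complexPairs.w - complexPairs.z) := by
  simp only [complexPairs, WeylPairs.complexify, polynomialPairs, q2]
  match_scalars <;> grind [Complex.I_mul_I]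

lemma p1_eq : p1 = (-Complex.I) • (complexPairs.dz + complexPairs.dw) := by
  simp only [complexPairs, WeylPairs.complexify, polynomialPairs, p1]
  module

lemma p2_eq : p2 = complexPairs.dz - complexPairs.dw := by
  simp only [complexPairs, WeylPairs.complexify, polynomialPairs, p2]
  module

lemma Cop_eq : Cop = complexPairs.angular := by
  rw [WeylPairs.angular, Cop, q1_eq, q2_eq, p1_eq, p2_eq]
  simp only [mul_add, add_mul, mul_sub, sub_mul, smul_mul_assoc, mul_smul_comm]
  match_scalars <;> grind [Complex.I_mul_I]

lemma Dop_eq : Dop = (-Complex.I) • complexPairs.degree := by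
  rw [WeylPairs.degree, Dop, q1_eq, q2_eq, p1_eq, p2_eq]
  simp only [mul_add, add_mul, mul_sub, sub_mul, smul_mul_assoc, mul_smul_comm]
  module

lemma q1_sq_add_q2_sq : q1 ^ 2 + q2 ^ 2 = complexPairs.z * complexPairs.w := by
  rw [q1_eq, q2_eq]
  simp only [sq, mul_add, add_mul, mul_sub, sub_mul, smul_mul_assoc, mul_smul_comm,
    complexPairs.z_comm_w.symm.eq]
  match_scalars <;> grind [Complex.I_mul_I]

lemma p1_sq_add_p2_sq : p1 ^ 2 + p2 ^ 2 = (-4 : ℂ) • (complexPairs.dz * complexPairs.dw) := by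
  rw [p1_eq, p2_eq]
  simp only [sq, mul_add, add_mul, mul_sub, sub_mul, smul_mul_assoc, mul_smul_comm,
    complexPairs.dz_comm_dw.symm.eq]
  match_scalars <;> grind [Complex.I_mul_I]

lemma p1_sq_sub_p2_sq :
    p1 ^ 2 - p2 ^ 2 = (-2 : ℂ) • (complexPairs.dz ^ 2 + complexPairs.dw ^ 2) := by
  rw [p1_eq, p2_eq]
  simp only [sq, mul_add, add_mul, mul_sub, sub_mul, smul_mul_assoc, mul_smul_comm,
    complexPairs.dz_comm_dw.symm.eq]
  match_scalars <;> grind [Complex.I_mul_I]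

lemma q1_mul_p1_sub_q2_mul_p2 :
    q1 * p1 - q2 * p2 =
      -Complex.I • (complexPairs.z * complexPairs.dw + complexPairs.w * complexPairs.dz) := by
  rw [q1_eq, q2_eq, p1_eq, p2_eq]
  simp only [mul_add, add_mul, mul_sub, sub_mul, smul_mul_assoc, mul_smul_comm]
  module

lemma q1_sq_add_q2_sq_mul_p1_sq_sub_p2_sq :
    (q1 ^ 2 + q2 ^ 2) * p1 ^ 2 - (q1 ^ 2 + q2 ^ 2) * p2 ^ 2 =
      (-2 : ℂ) •
        (complexPairs.z * complexPairs.w * (complexPairs.dz ^ 2 + complexPairs.dw ^ 2)) := by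
  rw [← mul_sub, q1_sq_add_q2_sq, p1_sq_sub_p2_sq, mul_smul_comm]

lemma q1_sq_mul_p1_sq_sub_q2_sq_mul_p2_sq :
    q1 ^ 2 * p1 ^ 2 - q2 ^ 2 * p2 ^ 2 =
      -((complexPairs.z ^ 2 + complexPairs.w ^ 2) * (complexPairs.dz * complexPairs.dw) +
        complexPairs.z * complexPairs.w * (complexPairs.dz ^ 2 + complexPairs.dw ^ 2)) := by
  rw [q1_eq, q2_eq, p1_eq, p2_eq]
  simp only [sq, mul_add, add_mul, mul_sub, sub_mul, smul_mul_assoc, mul_smul_comm, mul_assoc,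
    complexPairs.dz_comm_dw.symm.eq, complexPairs.z_comm_w.symm.eq]
  match_scalars <;> grind [Complex.I_mul_I]

lemma cubic_symmetry_difference :
    (q1 ^ 3 * (p1 ^ 3 - p1 * p2 ^ 2) + (q2 ^ 3 + 3 * (q1 ^ 2 * q2)) * (p1 ^ 2 * p2)) -
        (q2 ^ 3 * (p2 ^ 3 - p1 ^ 2 * p2) + (q1 ^ 3 + 3 * (q1 * q2 ^ 2)) * (p1 * p2 ^ 2)) =
      Complex.I •
        (complexPairs.z ^ 3 * complexPairs.dz ^ 2 * complexPairs.dw +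
          complexPairs.w ^ 3 * complexPairs.dw ^ 2 * complexPairs.dz +
          3 • (complexPairs.z * complexPairs.w ^ 2 * complexPairs.dw ^ 3 +
            complexPairs.w * complexPairs.z ^ 2 * complexPairs.dz ^ 3)) := by
  have three_mul_eq (x : Module.End ℂ V) : 3 * x = x + x + x := by noncomm_ring
  rw [q1_eq, q2_eq, p1_eq, p2_eq]
  simp only [pow_succ, pow_zero, one_mul, mul_add, add_mul, mul_sub, sub_mul, smul_mul_assoc,
    mul_smul_comm, mul_assoc, three_mul_eq, complexPairs.dz_comm_dw.symm.eq,
    complexPairs.dz_comm_dw.symm.left_comm, complexPairs.z_comm_w.symm.eq,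
    complexPairs.z_comm_w.symm.left_comm]
  match_scalars <;> grind [Complex.I_mul_I]

/-- The polynomial `h` with `h(i D) = γ₁ D + γ₂ D² + γ₃ D³`, where `i D` is the Euler operator. -/
def zernikePoly (γ₁ γ₂ γ₃ : ℂ) : ℂ[X] := cubic (-Complex.I * γ₁) (-γ₂) (Complex.I * γ₃)

lemma H3_eq (γ₁ γ₂ γ₃ : ℂ) :
    H3 γ₁ γ₂ γ₃ = complexPairs.hamiltonian (zernikePoly γ₁ γ₂ γ₃) := by
  have hfour (x : Module.End ℂ V) : 4 * x = (4 : ℂ) • x := by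
    rw [ofNat_smul_eq_nsmul]
    noncomm_ring
  rw [H3, p1_sq_add_p2_sq, Dop_eq, WeylPairs.hamiltonian, hfour, zernikePoly, aeval_cubic, smul_pow,
    smul_pow, neg_sq, Odd.neg_pow (by decide), Complex.I_sq, Complex.I_pow_three]
  module

lemma K2_eq (γ₁ γ₂ γ₃ : ℂ) :
    K2 γ₁ γ₂ γ₃ =
      (1 / 2 : ℂ) • (complexPairs.raising (zernikePoly γ₁ γ₂ γ₃) +
        complexPairs.lowering (zernikePoly γ₁ γ₂ γ₃)) + (γ₂ / 2) • Cop ^ 2 := by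
  have hquad := q1_sq_add_q2_sq_mul_p1_sq_sub_p2_sq
  have hquad' := q1_sq_mul_p1_sq_sub_q2_sq_mul_p2_sq
  simp only [mul_add, add_mul (complexPairs.z ^ 2)] at hquad hquad'
  rw [K2, I3', I3, WeylPairs.lowering, zernikePoly, WeylPairs.raising_cubic,
    WeylPairs.raising_cubic]
  simp only [WeylPairs.swap_z, WeylPairs.swap_w, WeylPairs.swap_dz, WeylPairs.swap_dw,
    complexPairs.z_comm_w.symm.eq, mul_assoc (_ ^ 2) complexPairs.dw complexPairs.dz,
    mul_assoc (_ ^ 2) complexPairs.dz complexPairs.dw, complexPairs.dz_comm_dw.symm.eq]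
  linear_combination (norm := skip) (1 / 2 : ℂ) • p1_sq_sub_p2_sq +
    ((γ₁ - γ₃) / 2) • q1_mul_p1_sub_q2_mul_p2 + (γ₂ / 2) • hquad +
    (γ₃ / 2) • cubic_symmetry_difference - (3 * Complex.I * γ₃ / 2) • hquad'
  match_scalars <;> grind [Complex.I_mul_I]

lemma K3_eq (γ₁ γ₂ γ₃ : ℂ) :
    K3 γ₁ γ₂ γ₃ = complexPairs.raising (zernikePoly γ₁ γ₂ γ₃) -
      complexPairs.lowering (zernikePoly γ₁ γ₂ γ₃) := by
  have hraising := (complexPairs.semiconjBy_raising_angular (zernikePoly γ₁ γ₂ γ₃)).eq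
  have hlowering := (complexPairs.semiconjBy_lowering_angular (zernikePoly γ₁ γ₂ γ₃)).eq
  rw [K3, K1, K2_eq, Cop_eq]
  simp only [mul_add, add_mul, mul_smul_comm, smul_mul_assoc, hraising, hlowering,
    sub_mul, two_mul, ← pow_succ, ← pow_succ']
  module

lemma Kplus_eq (γ₁ γ₂ γ₃ : ℂ) :
    Kplus γ₁ γ₂ γ₃ = complexPairs.raising (zernikePoly γ₁ γ₂ γ₃) := by
  rw [Kplus, K3_eq, K2_eq, K1]
  module

lemma Kminus_eq (γ₁ γ₂ γ₃ : ℂ) :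
    Kminus γ₁ γ₂ γ₃ = complexPairs.lowering (zernikePoly γ₁ γ₂ γ₃) := by
  rw [Kminus, K3_eq, K2_eq, K1]
  module

lemma Kop_eq : Kop = (1 / 2 : ℂ) • complexPairs.angular := by
  rw [Kop, K1, Cop_eq]

lemma Phi1op_eq (γ₁ γ₂ γ₃ : ℂ) :
    Phi1op γ₁ γ₂ γ₃ = (1 / 4 : ℂ) • (complexPairs.hamiltonian (zernikePoly γ₁ γ₂ γ₃) -
      aeval (-complexPairs.angular) (zernikePoly γ₁ γ₂ γ₃)) := by
  rw [Phi1op, H3_eq, Kop_eq, zernikePoly, aeval_neg_cubic, aeval_cubic, smul_pow, smul_pow]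
  module

lemma Phi2op_eq (γ₁ γ₂ γ₃ : ℂ) :
    Phi2op γ₁ γ₂ γ₃ = complexPairs.hamiltonian (zernikePoly γ₁ γ₂ γ₃) -
      aeval (complexPairs.angular - 2) (zernikePoly γ₁ γ₂ γ₃) := by
  have hshift : Kop - 1 = (1 / 2 : ℂ) • (complexPairs.angular - 2) := by
    rw [Kop_eq, ← one_add_one_eq_two (R := Module.End ℂ V)]
    module
  rw [Phi2op, H3_eq, hshift, zernikePoly, aeval_cubic, smul_pow, smul_pow]
  module

/-- the fifth-order polynomial Higgs algebra generated by
`(K, K₊, K₋)` and the factorization `K₊K₋ = Φ₁Φ₂` with `⁅Φ₁,Φ₂⁆ = 0`. -/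
theorem cubic_zernike_higgs_algebra (γ₁ γ₂ γ₃ : ℂ) :
    Kop * Kplus γ₁ γ₂ γ₃ - Kplus γ₁ γ₂ γ₃ * Kop = Kplus γ₁ γ₂ γ₃ ∧
    Kop * Kminus γ₁ γ₂ γ₃ - Kminus γ₁ γ₂ γ₃ * Kop = -Kminus γ₁ γ₂ γ₃ ∧
    Kminus γ₁ γ₂ γ₃ * Kplus γ₁ γ₂ γ₃ - Kplus γ₁ γ₂ γ₃ * Kminus γ₁ γ₂ γ₃
      = (2 * (γ₁ ^ 2 + 2 * Complex.I * γ₁ * γ₂ - 4 * γ₁ * γ₃)) • Kop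
        + (4 * (γ₂ + 3 * Complex.I * γ₃)) • (H3 γ₁ γ₂ γ₃ * Kop)
        + (16 * (γ₂ ^ 2 + 2 * γ₃ ^ 2 - 2 * γ₁ * γ₃ + 2 * Complex.I * γ₂ * γ₃)) • Kop ^ 3
        + (96 * γ₃ ^ 2) • Kop ^ 5 ∧
    Kplus γ₁ γ₂ γ₃ * Kminus γ₁ γ₂ γ₃ = Phi1op γ₁ γ₂ γ₃ * Phi2op γ₁ γ₂ γ₃ ∧
    Phi1op γ₁ γ₂ γ₃ * Phi2op γ₁ γ₂ γ₃ - Phi2op γ₁ γ₂ γ₃ * Phi1op γ₁ γ₂ γ₃ = 0 := by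
  rw [H3_eq, Kplus_eq, Kminus_eq, Phi1op_eq, Phi2op_eq, Kop_eq]
  refine ⟨?_, ?_, ?_, ?_, ?_⟩
  · rw [mul_smul_comm, (complexPairs.semiconjBy_raising_angular _).eq, smul_mul_assoc, sub_mul,
      two_mul]
    module
  · rw [mul_smul_comm, (complexPairs.semiconjBy_lowering_angular _).eq, smul_mul_assoc, add_mul,
      two_mul]
    module
  · have hbracket := complexPairs.four_nsmul_lowering_raising_commutator_cubic
      (-Complex.I * γ₁) (-γ₂) (Complex.I * γ₃)
    rw [← zernikePoly] at hbracket
    linear_combination (norm := skip) (1 / 4 : ℂ) • hbracket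
    simp only [mul_smul_comm, smul_pow]
    match_scalars <;> grind [Complex.I_mul_I]
  · rw [smul_mul_assoc, ← WeylPairs.four_nsmul_raising_mul_lowering]
    module
  · rw [sub_eq_zero]
    exact (complexPairs.commute_hamiltonian_sub_aeval _).smul_left _
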